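/- arXiv:2405.19317 — 2 statements merged into one kernel-verified Lean document; each statement's English description precedes it below -/
import Mathlib

section
/- Let K ≥ 2 be an integer, ã ∈ {1,…,K}, and σ_a > 0 for all a ∈ {1,…,K}; set S = sqrt(Σ_{b≠ã} σ_b²). Then the supremum, over all w : {1,…,K} → ℝ with w_a > 0 for all a and Σ_a w_a = 1, of min_{a ≠ ã} 1/(2(σ_ã²/w_ã + σ_a²/w_a)), equals 1/(2(σ_ã + S)²), and this supremum is attained at the GNA weights w^GNA_ã = σ_ã/(σ_ã + S), w^GNA_a = σ_a²/(S(σ_ã + S)) for a ≠ ã. -/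
/-!
Among the rivals, the largest ratio `σ_a² / w_a` is at least the mediant
`(∑ σ_b²) / (∑ w_b) = S² / (1 - w_ã)`, and Sedrakyan's lemma gives
`σ_ã² / w_ã + S² / (1 - w_ã) ≥ (σ_ã + S)²`. Hence for all weights some pairwise variance is at least
`(σ_ã + S)²`. The GNA weights turn both inequalities into equalities: among the rivals
`w_a` is proportional to `σ_a²`, and `w_ã : (1 - w_ã) = σ_ã : S`.
-/

section OrderedField

variable {R : Type*} [Semifield R] [LinearOrder R] [IsStrictOrderedRing R]

lemma exists_sum_div_sum_le_div {ι : Type*} {s : Finset ι} (hs : s.Nonempty) (f : ι → R)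
    {w : ι → R} (hw : ∀ i ∈ s, 0 < w i) :
    ∃ i ∈ s, (∑ j ∈ s, f j) / ∑ j ∈ s, w j ≤ f i / w i := by
  have hsum : ∑ j ∈ s, w j ≠ 0 := (Finset.sum_pos hw hs).ne'
  have hweighted : ∑ i ∈ s, (∑ j ∈ s, f j) / (∑ j ∈ s, w j) * w i ≤ ∑ i ∈ s, f i := by
    rw [← Finset.mul_sum, div_mul_cancel₀ _ hsum]
  obtain ⟨i, hi, hle⟩ := Finset.exists_le_of_sum_le hs hweighted
  exact ⟨i, hi, (le_div_iff₀ (hw i hi)).mpr hle⟩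

lemma add_sq_div_add_le_sq_div_add_sq_div [ExistsAddOfLE R] (a b : R) {x y : R}
    (hx : 0 < x) (hy : 0 < y) : (a + b) ^ 2 / (x + y) ≤ a ^ 2 / x + b ^ 2 / y := by
  simpa [Fin.sum_univ_two] using
    Finset.sq_sum_div_le_sum_sq_div Finset.univ ![a, b] (g := ![x, y])
      (by simp [Fin.forall_fin_two, hx, hy])

end OrderedField

namespace GeneralizedNeyman

variable {ι : Type*} [Fintype ι] [DecidableEq ι] {a₀ a : ι} {σ w : ι → ℝ}

/-- The aggregate standard deviation `S` of the arms other than the distinguished arm `a₀`. -/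
noncomputable def rivalScale (σ : ι → ℝ) (a₀ : ι) : ℝ :=
  √(∑ b ∈ Finset.univ.erase a₀, σ b ^ 2)

/-- The Generalized Neyman Allocation `w^GNA` with distinguished arm `a₀`. -/
noncomputable def gnaWeight (σ : ι → ℝ) (a₀ a : ι) : ℝ :=
  if a = a₀ then σ a₀ / (σ a₀ + rivalScale σ a₀)
  else σ a ^ 2 / (rivalScale σ a₀ * (σ a₀ + rivalScale σ a₀))

/-- The asymptotic variance of the estimated gap between arms `a₀` and `a` when arm `b` receives the
fraction `w b` of the samples. -/
noncomputable def gapVariance (σ w : ι → ℝ) (a₀ a : ι) : ℝ :=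
  σ a₀ ^ 2 / w a₀ + σ a ^ 2 / w a

/-- The objective of the max-min problem: the least of `1 / (2 * gapVariance σ w a₀ a)` over the
arms `a ≠ a₀`. It is `0` when `a₀` is the only arm, as an infimum over an empty family of reals. -/
noncomputable def worstCaseRate (σ w : ι → ℝ) (a₀ : ι) : ℝ :=
  ⨅ a : {a // a ≠ a₀}, 1 / (2 * gapVariance σ w a₀ a)

lemma rivalScale_nonneg : 0 ≤ rivalScale σ a₀ :=
  Real.sqrt_nonneg _

lemma rivalScale_sq : rivalScale σ a₀ ^ 2 = ∑ b ∈ Finset.univ.erase a₀, σ b ^ 2 :=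
  Real.sq_sqrt (Finset.sum_nonneg fun b _ ↦ sq_nonneg (σ b))

lemma rivalScale_pos (ha : a ≠ a₀) (hσa : σ a ≠ 0) : 0 < rivalScale σ a₀ :=
  Real.sqrt_pos.mpr <| Finset.sum_pos' (fun b _ ↦ sq_nonneg (σ b))
    ⟨a, Finset.mem_erase.mpr ⟨ha, Finset.mem_univ a⟩, sq_pos_of_ne_zero hσa⟩

lemma exists_add_rivalScale_sq_le_gapVariance [Nontrivial ι] (σ : ι → ℝ) (a₀ : ι)
    (hw : ∀ a, 0 < w a) (hw_sum : ∑ a, w a = 1) :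
    ∃ a ≠ a₀, (σ a₀ + rivalScale σ a₀) ^ 2 ≤ gapVariance σ w a₀ a := by
  have hrivals : (Finset.univ.erase a₀).Nonempty := Finset.univ_nontrivial.erase_nonempty
  obtain ⟨a, ha, hmediant⟩ :=
    exists_sum_div_sum_le_div hrivals (fun b ↦ σ b ^ 2) (fun b _ ↦ hw b)
  refine ⟨a, Finset.ne_of_mem_erase ha, ?_⟩
  set r := ∑ b ∈ Finset.univ.erase a₀, w b with hr
  have hr_pos : 0 < r := Finset.sum_pos (fun b _ ↦ hw b) hrivals
  have htotal : w a₀ + r = 1 := by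
    rw [hr, Finset.add_sum_erase _ _ (Finset.mem_univ a₀), hw_sum]
  calc (σ a₀ + rivalScale σ a₀) ^ 2
      = (σ a₀ + rivalScale σ a₀) ^ 2 / (w a₀ + r) := by rw [htotal, div_one]
    _ ≤ σ a₀ ^ 2 / w a₀ + rivalScale σ a₀ ^ 2 / r :=
        add_sq_div_add_le_sq_div_add_sq_div _ _ (hw a₀) hr_pos
    _ ≤ gapVariance σ w a₀ a := by
        rw [rivalScale_sq]
        exact add_le_add_right hmediant _

lemma worstCaseRate_le [Nontrivial ι] (hσ : 0 < σ a₀) (hw : ∀ a, 0 < w a)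
    (hw_sum : ∑ a, w a = 1) :
    worstCaseRate σ w a₀ ≤ 1 / (2 * (σ a₀ + rivalScale σ a₀) ^ 2) := by
  obtain ⟨a, ha, hle⟩ := exists_add_rivalScale_sq_le_gapVariance σ a₀ hw hw_sum
  have hscale : 0 < σ a₀ + rivalScale σ a₀ := add_pos_of_pos_of_nonneg hσ rivalScale_nonneg
  calc worstCaseRate σ w a₀
      ≤ 1 / (2 * gapVariance σ w a₀ a) :=
        ciInf_le (Set.finite_range _).bddBelow (⟨a, ha⟩ : {a // a ≠ a₀})
    _ ≤ 1 / (2 * (σ a₀ + rivalScale σ a₀) ^ 2) := by gcongr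

lemma gnaWeight_self : gnaWeight σ a₀ a₀ = σ a₀ / (σ a₀ + rivalScale σ a₀) :=
  if_pos rfl

lemma gnaWeight_of_ne (ha : a ≠ a₀) :
    gnaWeight σ a₀ a = σ a ^ 2 / (rivalScale σ a₀ * (σ a₀ + rivalScale σ a₀)) :=
  if_neg ha

lemma gnaWeight_pos (hσ₀ : 0 < σ a₀) (hσa : σ a ≠ 0) : 0 < gnaWeight σ a₀ a := by
  obtain rfl | ha := eq_or_ne a a₀
  · rw [gnaWeight_self]
    exact div_pos hσ₀ (add_pos_of_pos_of_nonneg hσ₀ rivalScale_nonneg)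
  · have hS : 0 < rivalScale σ a₀ := rivalScale_pos ha hσa
    rw [gnaWeight_of_ne ha]
    positivity

lemma sum_gnaWeight (hS : rivalScale σ a₀ ≠ 0) (hσS : σ a₀ + rivalScale σ a₀ ≠ 0) :
    ∑ a, gnaWeight σ a₀ a = 1 := by
  have hrivals : ∑ a ∈ Finset.univ.erase a₀, gnaWeight σ a₀ a
      = rivalScale σ a₀ / (σ a₀ + rivalScale σ a₀) := by
    rw [Finset.sum_congr rfl fun a ha ↦ gnaWeight_of_ne (Finset.ne_of_mem_erase ha),
      ← Finset.sum_div, ← rivalScale_sq]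
    field_simp
  rw [← Finset.add_sum_erase _ _ (Finset.mem_univ a₀), hrivals, gnaWeight_self, ← add_div,
    div_self hσS]

lemma gapVariance_gnaWeight (hσ₀ : 0 < σ a₀) (ha : a ≠ a₀) (hσa : σ a ≠ 0) :
    gapVariance σ (gnaWeight σ a₀) a₀ a = (σ a₀ + rivalScale σ a₀) ^ 2 := by
  have hS : 0 < rivalScale σ a₀ := rivalScale_pos ha hσa
  rw [gapVariance, gnaWeight_self, gnaWeight_of_ne ha]
  field_simp

lemma worstCaseRate_gnaWeight [Nontrivial ι] (hσ : ∀ a, 0 < σ a) :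
    worstCaseRate σ (gnaWeight σ a₀) a₀ = 1 / (2 * (σ a₀ + rivalScale σ a₀) ^ 2) := by
  have : Nonempty {a // a ≠ a₀} := nonempty_subtype.mpr (exists_ne a₀)
  calc worstCaseRate σ (gnaWeight σ a₀) a₀
      = ⨅ _ : {a // a ≠ a₀}, 1 / (2 * (σ a₀ + rivalScale σ a₀) ^ 2) :=
        iInf_congr fun a ↦ by rw [gapVariance_gnaWeight (hσ a₀) a.2 (hσ a).ne']
    _ = 1 / (2 * (σ a₀ + rivalScale σ a₀) ^ 2) := ciInf_const

end GeneralizedNeyman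

open GeneralizedNeyman in
theorem stmt5_general {ι : Type*} [Fintype ι] [DecidableEq ι] [Nontrivial ι] (a₀ : ι) (σ : ι → ℝ)
    (hσ : ∀ a, 0 < σ a) :
    IsGreatest
      {x : ℝ | ∃ w : ι → ℝ, (∀ a, 0 < w a) ∧ (∑ a, w a = 1) ∧ x = worstCaseRate σ w a₀}
      (1 / (2 * (σ a₀ + rivalScale σ a₀) ^ 2)) ∧
    worstCaseRate σ (gnaWeight σ a₀) a₀ = 1 / (2 * (σ a₀ + rivalScale σ a₀) ^ 2) := by
  obtain ⟨b, hb⟩ := exists_ne a₀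
  have hS : 0 < rivalScale σ a₀ := rivalScale_pos hb (hσ b).ne'
  have hgna_sum : ∑ a, gnaWeight σ a₀ a = 1 := sum_gnaWeight hS.ne' (add_pos (hσ a₀) hS).ne'
  have hgna_rate := worstCaseRate_gnaWeight (a₀ := a₀) hσ
  refine ⟨⟨⟨gnaWeight σ a₀, fun a ↦ gnaWeight_pos (hσ a₀) (hσ a).ne', hgna_sum,
    hgna_rate.symm⟩, ?_⟩, hgna_rate⟩
  rintro _ ⟨w, hw, hw_sum, rfl⟩
  exact worstCaseRate_le (hσ a₀) hw hw_sum

/-- The supremum over the open probability simplex of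
`min_{a ≠ atil} 1/(2(σ_atil²/w_atil + σ_a²/w_a))` equals `1/(2(σ_atil + S)²)`,
and it is attained at the GNA weights. -/
theorem stmt5 {K : ℕ} (hK : 2 ≤ K) (atil : Fin K) (σ : Fin K → ℝ) (hσ : ∀ a, 0 < σ a) :
    let S : ℝ := Real.sqrt (∑ b ∈ Finset.univ.erase atil, (σ b) ^ 2)
    let wGNA : Fin K → ℝ := fun a =>
      if a = atil then σ atil / (σ atil + S) else (σ a) ^ 2 / (S * (σ atil + S))
    IsGreatest
      { x : ℝ | ∃ w : Fin K → ℝ, (∀ a, 0 < w a) ∧ (∑ a, w a = 1) ∧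
          x = ⨅ a : {a : Fin K // a ≠ atil},
            1 / (2 * ((σ atil) ^ 2 / w atil + (σ (a : Fin K)) ^ 2 / w (a : Fin K))) }
      (1 / (2 * (σ atil + S) ^ 2)) ∧
    (⨅ a : {a : Fin K // a ≠ atil},
        1 / (2 * ((σ atil) ^ 2 / wGNA atil + (σ (a : Fin K)) ^ 2 / wGNA (a : Fin K))))
      = 1 / (2 * (σ atil + S) ^ 2) := by
  have : Nontrivial (Fin K) := Fin.nontrivial_iff_two_le.mpr hK
  exact stmt5_general atil σ hσ
end

section
/- Let (Ω, F, P) be a probability space, G ⊆ F a sub-σ-algebra, and A₁, A₂ ∈ F disjoint events. For i = 1, 2 let Y_i : Ω → ℝ be random variables with 1_{A_i}·Y_i integrable, let w_i be G-measurable random variables with w_i ≥ δ almost surely for some constant δ > 0, let μ̂_i be bounded G-measurable random variables, and let μ_i ∈ ℝ be constants. Assume that almost surely, for i = 1, 2: E[1_{A_i} | G] = w_i and E[1_{A_i}·Y_i | G] = w_i·μ_i. Set Δ = μ₁ − μ₂ and ψ_i = 1_{A_i}·(Y_i − μ̂_i)/w_i + μ̂_i. Then E[ ψ₁ − ψ₂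 − Δ | G ] = 0 almost surely. -/
open MeasureTheory

/-!
Conditionally on `m`, the plug-in `u` and the propensity `w` of an arm are known, so the residual
`D (Y - u)` has conditional mean `w f - w u`. Dividing by `w` and adding `u` back leaves the
conditional mean outcome `f`, whatever the plug-in is; the contrast of the two arms then follows by
linearity.
-/

section AIPW

variable {Ω E : Type*} {m m0 : MeasurableSpace Ω} {P : Measure Ω}
  [NormedAddCommGroup E] [NormedSpace ℝ E]

section CondExp

lemma integrable_inv_smul_of_ae_le_norm {w : Ω → ℝ} {R : Ω → E} {δ : ℝ}
    (hR : Integrable R P) (hw : AEStronglyMeasurable w P) (hδ : 0 < δ)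
    (hδw : ∀ᵐ ω ∂P, δ ≤ ‖w ω‖) : Integrable (w⁻¹ • R) P := by
  have inv_le : ∀ᵐ ω ∂P, ‖w⁻¹ ω‖ ≤ δ⁻¹ := by
    filter_upwards [hδw] with ω hω
    rw [Pi.inv_apply, norm_inv]
    exact inv_anti₀ hδ hω
  exact hR.bdd_smul δ⁻¹ hw.aemeasurable.inv.aestronglyMeasurable inv_le

variable [CompleteSpace E]

lemma condExp_sub_ae_eq_zero_of_condExp_ae_eq (hm : m ≤ m0) [SigmaFinite (P.trim hm)]
    {X f : Ω → E} (hX : Integrable X P) (hf : P[X | m] =ᵐ[P] f) : P[X - f | m] =ᵐ[P] 0 :=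
  calc P[X - f | m]
    _ =ᵐ[P] P[X | m] - P[f | m] := condExp_sub hX (integrable_condExp.congr hf) m
    _ =ᵐ[P] P[X | m] - P[P[X | m] | m] := .sub .rfl (condExp_congr_ae hf.symm)
    _ =ᵐ[P] P[X | m] - P[X | m] := .sub .rfl (condExp_condExp_of_le le_rfl hm)
    _ = 0 := sub_self _

lemma condExp_smul_sub_of_stronglyMeasurable {D : Ω → ℝ} {Y u : Ω → E}
    (hu : StronglyMeasurable[m] u) (hD : Integrable D P) (hDY : Integrable (D • Y) P)
    (hDu : Integrable (D • u) P) :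
    P[D • (Y - u) | m] =ᵐ[P] P[D • Y | m] - P[D | m] • u :=
  calc P[D • (Y - u) | m]
    _ = P[D • Y - D • u | m] := by rw [smul_sub]
    _ =ᵐ[P] P[D • Y | m] - P[D • u | m] := condExp_sub hDY hDu m
    _ =ᵐ[P] P[D • Y | m] - P[D | m] • u :=
      .sub .rfl (condExp_smul_of_aestronglyMeasurable_right hD hDu hu.aestronglyMeasurable)

lemma condExp_inv_smul_of_condExp_ae_eq_smul {w : Ω → ℝ} {R g : Ω → E} (hw : Measurable[m] w)
    (hw0 : ∀ᵐ ω ∂P, w ω ≠ 0) (hR : Integrable R P) (hwR : Integrable (w⁻¹ • R) P)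
    (hg : P[R | m] =ᵐ[P] w • g) : P[w⁻¹ • R | m] =ᵐ[P] g := by
  have pull_out : P[w⁻¹ • R | m] =ᵐ[P] w⁻¹ • P[R | m] :=
    condExp_smul_of_aestronglyMeasurable_left
      hw.inv.stronglyMeasurable.aestronglyMeasurable hwR hR
  filter_upwards [pull_out, hg, hw0] with ω hω hgω hwω
  rw [hω, Pi.smul_apply', hgω]
  exact inv_smul_smul₀ hwω (g ω)

end CondExp

/-- The augmented inverse-propensity-weighted summand `ψ = D (Y - u) / w + u` of one arm, with
allocation `D`, outcome `Y`, propensity `w` and plug-in estimate `u`. Outcomes may be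
vector-valued, hence the scalar multiplications. -/
noncomputable def aipwSummand (D : Ω → ℝ) (Y : Ω → E) (w : Ω → ℝ) (u : Ω → E) : Ω → E :=
  fun ω => (w ω)⁻¹ • D ω • (Y ω - u ω) + u ω

/-- One arm of an adaptive experiment with past `m`: the allocation `D` has conditional mean `w`,
and the outcome `Y` has conditional mean `f`, in the sense that `E[D Y | m] = w f`. The propensity
`w` and the plug-in estimate `u` of `f` are known from the past. The mean `f` may depend on the
past, and `D` may be any integrable weight, not only the indicator of an event. -/
structure IsAIPWArm (m : MeasurableSpace Ω) {m0 : MeasurableSpace Ω} (P : Measure Ω)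
    (D : Ω → ℝ) (Y : Ω → E) (w : Ω → ℝ) (u f : Ω → E) : Prop where
  measurable_propensity : Measurable[m] w
  propensity_ne_zero : ∀ᵐ ω ∂P, w ω ≠ 0
  stronglyMeasurable_plugin : StronglyMeasurable[m] u
  integrable_plugin : Integrable u P
  integrable_alloc : Integrable D P
  integrable_alloc_smul_outcome : Integrable (D • Y) P
  integrable_alloc_smul_plugin : Integrable (D • u) P
  integrable_weighted_residual : Integrable (w⁻¹ • D • (Y - u)) P
  condExp_alloc : P[D | m] =ᵐ[P] w
  condExp_alloc_smul_outcome : P[D • Y | m] =ᵐ[P] w • f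

namespace IsAIPWArm

variable {D w : Ω → ℝ} {Y u f : Ω → E}

lemma of_event_of_ae_le [IsFiniteMeasure P] (hm : m ≤ m0) {A : Set Ω} (hA : MeasurableSet[m0] A)
    (hAY : Integrable (A.indicator (fun _ => (1 : ℝ)) • Y) P) (hw : Measurable[m] w) {δ : ℝ}
    (hδ : 0 < δ) (hδw : ∀ᵐ ω ∂P, δ ≤ w ω) (hu : StronglyMeasurable[m] u)
    (hu_int : Integrable u P) (hcondA : P[A.indicator (fun _ => (1 : ℝ)) | m] =ᵐ[P] w)
    (hcondAY : P[A.indicator (fun _ => (1 : ℝ)) • Y | m] =ᵐ[P] w • f) :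
    IsAIPWArm m P (A.indicator fun _ => 1) Y w u f := by
  have hAu : Integrable (A.indicator (fun _ => (1 : ℝ)) • u) P := by
    have indicator_smul : A.indicator (fun _ => (1 : ℝ)) • u = A.indicator u := by
      ext ω
      by_cases hω : ω ∈ A <;> simp [hω]
    exact indicator_smul ▸ hu_int.indicator hA
  have hresidual : Integrable (A.indicator (fun _ => (1 : ℝ)) • (Y - u)) P := by
    rw [smul_sub]
    exact hAY.sub hAu
  exact
    { measurable_propensity := hw
      propensity_ne_zero := hδw.mono fun _ hω => (hδ.trans_le hω).ne'
      stronglyMeasurable_plugin := hu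
      integrable_plugin := hu_int
      integrable_alloc := (integrable_const 1).indicator hA
      integrable_alloc_smul_outcome := hAY
      integrable_alloc_smul_plugin := hAu
      integrable_weighted_residual :=
        integrable_inv_smul_of_ae_le_norm hresidual (hw.mono hm le_rfl).aestronglyMeasurable hδ
          (hδw.mono fun _ hω => hω.trans (Real.le_norm_self _))
      condExp_alloc := hcondA
      condExp_alloc_smul_outcome := hcondAY }

lemma integrable_residual (h : IsAIPWArm m P D Y w u f) : Integrable (D • (Y - u)) P := by
  rw [smul_sub]
  exact h.integrable_alloc_smul_outcome.sub h.integrable_alloc_smul_plugin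

lemma integrable_aipwSummand (h : IsAIPWArm m P D Y w u f) :
    Integrable (aipwSummand D Y w u) P :=
  h.integrable_weighted_residual.add h.integrable_plugin

variable [CompleteSpace E]

lemma condExp_residual (h : IsAIPWArm m P D Y w u f) :
    P[D • (Y - u) | m] =ᵐ[P] w • (f - u) :=
  calc P[D • (Y - u) | m]
    _ =ᵐ[P] P[D • Y | m] - P[D | m] • u :=
      condExp_smul_sub_of_stronglyMeasurable h.stronglyMeasurable_plugin h.integrable_alloc
        h.integrable_alloc_smul_outcome h.integrable_alloc_smul_plugin
    _ =ᵐ[P] w • f - w • u := h.condExp_alloc_smul_outcome.sub (h.condExp_alloc.smul .rfl)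
    _ = w • (f - u) := (smul_sub w f u).symm

lemma condExp_aipwSummand (h : IsAIPWArm m P D Y w u f) (hm : m ≤ m0)
    [SigmaFinite (P.trim hm)] : P[aipwSummand D Y w u | m] =ᵐ[P] f :=
  calc P[aipwSummand D Y w u | m]
    _ =ᵐ[P] P[w⁻¹ • D • (Y - u) | m] + P[u | m] :=
      condExp_add h.integrable_weighted_residual h.integrable_plugin m
    _ =ᵐ[P] (f - u) + u :=
      .add
        (condExp_inv_smul_of_condExp_ae_eq_smul h.measurable_propensity h.propensity_ne_zero
          h.integrable_residual h.integrable_weighted_residual h.condExp_residual)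
        (.of_eq (condExp_of_stronglyMeasurable hm h.stronglyMeasurable_plugin h.integrable_plugin))
    _ = f := sub_add_cancel f u

end IsAIPWArm

theorem stmt17_general [CompleteSpace E] (hm : m ≤ m0) [SigmaFinite (P.trim hm)]
    {D₁ D₂ w₁ w₂ : Ω → ℝ} {Y₁ Y₂ u₁ u₂ f₁ f₂ : Ω → E}
    (h₁ : IsAIPWArm m P D₁ Y₁ w₁ u₁ f₁) (h₂ : IsAIPWArm m P D₂ Y₂ w₂ u₂ f₂) :
    P[fun ω => aipwSummand D₁ Y₁ w₁ u₁ ω - aipwSummand D₂ Y₂ w₂ u₂ ω - (f₁ ω - f₂ ω) | m]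
      =ᵐ[P] fun _ => 0 := by
  have hψ₁ := h₁.integrable_aipwSummand
  have hψ₂ := h₂.integrable_aipwSummand
  have condExp_contrast :
      P[aipwSummand D₁ Y₁ w₁ u₁ - aipwSummand D₂ Y₂ w₂ u₂ | m] =ᵐ[P] f₁ - f₂ :=
    (condExp_sub hψ₁ hψ₂ m).trans
      ((h₁.condExp_aipwSummand hm).sub (h₂.condExp_aipwSummand hm))
  exact condExp_sub_ae_eq_zero_of_condExp_ae_eq hm (hψ₁.sub hψ₂) condExp_contrast

end AIPW

/-- The A2IPW difference is a (conditional) martingale difference: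
with `ψ_i = 1_{A_i}(Y_i − μ̂_i)/w_i + μ̂_i` and `Δ = μ₁ − μ₂`,
`E[ψ₁ − ψ₂ − Δ | G] = 0` almost surely. -/
theorem stmt17 {Ω : Type*} {m m0 : MeasurableSpace Ω} (hm : m ≤ m0)
    (P : Measure Ω) [IsProbabilityMeasure P]
    (A₁ A₂ : Set Ω) (hA₁ : MeasurableSet[m0] A₁) (hA₂ : MeasurableSet[m0] A₂)
    (hdisj : Disjoint A₁ A₂)
    (Y₁ Y₂ : Ω → ℝ)
    (hAY1 : Integrable (fun ω => A₁.indicator (fun _ => (1 : ℝ)) ω * Y₁ ω) P)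
    (hAY2 : Integrable (fun ω => A₂.indicator (fun _ => (1 : ℝ)) ω * Y₂ ω) P)
    (w₁ w₂ : Ω → ℝ) (hw₁ : Measurable[m] w₁) (hw₂ : Measurable[m] w₂)
    (δ : ℝ) (hδ : 0 < δ) (hw₁δ : ∀ᵐ ω ∂P, δ ≤ w₁ ω) (hw₂δ : ∀ᵐ ω ∂P, δ ≤ w₂ ω)
    (μhat₁ μhat₂ : Ω → ℝ) (hμhat₁ : Measurable[m] μhat₁) (hμhat₂ : Measurable[m] μhat₂)
    (Cμ : ℝ) (hμhat₁bdd : ∀ ω, |μhat₁ ω| ≤ Cμ) (hμhat₂bdd : ∀ ω, |μhat₂ ω| ≤ Cμ)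
    (μ₁ μ₂ : ℝ)
    (hcond1₁ : P[A₁.indicator (fun _ => (1 : ℝ)) | m] =ᵐ[P] w₁)
    (hcond1₂ : P[A₂.indicator (fun _ => (1 : ℝ)) | m] =ᵐ[P] w₂)
    (hcond2₁ : P[fun ω => A₁.indicator (fun _ => (1 : ℝ)) ω * Y₁ ω | m]
      =ᵐ[P] fun ω => w₁ ω * μ₁)
    (hcond2₂ : P[fun ω => A₂.indicator (fun _ => (1 : ℝ)) ω * Y₂ ω | m]
      =ᵐ[P] fun ω => w₂ ω * μ₂) :
    P[fun ω =>
        (A₁.indicator (fun _ => (1 : ℝ)) ω * (Y₁ ω - μhat₁ ω) / w₁ ω + μhat₁ ω)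
          - (A₂.indicator (fun _ => (1 : ℝ)) ω * (Y₂ ω - μhat₂ ω) / w₂ ω + μhat₂ ω)
          - (μ₁ - μ₂) | m]
      =ᵐ[P] fun _ => 0 := by
  have hμhat₁_int : Integrable μhat₁ P :=
    .of_bound (hμhat₁.mono hm le_rfl).aestronglyMeasurable Cμ (.of_forall hμhat₁bdd)
  have hμhat₂_int : Integrable μhat₂ P :=
    .of_bound (hμhat₂.mono hm le_rfl).aestronglyMeasurable Cμ (.of_forall hμhat₂bdd)
  simpa only [aipwSummand, smul_eq_mul, div_eq_inv_mul] using stmt17_general hm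
    (.of_event_of_ae_le hm hA₁ hAY1 hw₁ hδ hw₁δ hμhat₁.stronglyMeasurable hμhat₁_int
      hcond1₁ hcond2₁)
    (.of_event_of_ae_le hm hA₂ hAY2 hw₂ hδ hw₂δ hμhat₂.stronglyMeasurable hμhat₂_int
      hcond1₂ hcond2₂)
end
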